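/- Fix ε ∈ ℂ∖{0}, let U ⊆ ℂ be open, and let q, p, r, s, α : U → ℂ be differentiable. For x ∈ ℂ and t ∈ U define A_ε(x,t) = [[r + (x² + p − q²)/ε, (x − q)/ε],[−2s − 1 − 2r(x + q) + ((x + q)(t − 2p + 2q²) − 2α)/ε, −r − (x² + p − q²)/ε]] and B_ε(x,t) = [[0, 0],[−r, 0]] + (1/(2ε))·[[q + x, 1],[−2p + 2q² + t, −q − x]]. Then for t₀ ∈ U the zero-curvature equation ∂_t A_ε(x,t)|_{t=t₀} − ∂_x B_ε(x,t)|_{x,t₀} + [A_ε(x,t₀), B_ε(x,t₀)] = 0 holds for all x ∈ ℂ if and only if at t₀: q′ = p/ε + r, (p + εr)′ = (2q³ + tq − α)/ε − s, and (α + εs)′ = 0. -/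

import Mathlib

/-!
In the shifted variables `P = p + ε r` and `a = α + ε (s + 1/2)` the pair `(A, B)` is the Jimbo–Miwa
pair divided by `ε`. Let `u = q' - P/ε`, `v = P' - (2q³ + tq - a)/ε - 1/2` and `w = a'` be the
defects of the Hamiltonian equations. The entries of the curvature are linear in `(u, v, w)` and
form a triangular system: the upper right entry determines `u`, then the diagonal determines `v`,
then the lower left entry determines `w`. Hence vanishing at a single `x` already forces all three
equations.
-/

namespace PainleveII

section CommRing

variable {R : Type*} [CommRing R]

/-- The Jimbo–Miwa Higgs field of Painlevé II, whose `ε⁻¹`-multiple is the `x`-component of the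
connection. Here `q`, `p` are the canonical coordinates and `α` the Painlevé parameter. -/
def higgsField (q p α x t : R) : Matrix (Fin 2) (Fin 2) R :=
  !![x ^ 2 + p - q ^ 2, x - q;
     (x + q) * (t - 2 * p + 2 * q ^ 2) - 2 * α, -(x ^ 2 + p - q ^ 2)]

/-- The companion of `higgsField` in the Lax pair, whose `(2ε)⁻¹`-multiple is the `t`-component of
the connection. -/
def deformationField (q p x t : R) : Matrix (Fin 2) (Fin 2) R :=
  !![x + q, 1; t - 2 * p + 2 * q ^ 2, -(x + q)]

theorem higgsField_commutator_deformationField (q p α x t : R) :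
    higgsField q p α x t * deformationField q p x t
        - deformationField q p x t * higgsField q p α x t =
      (2 : R) • !![α - q * (t - 2 * p + 2 * q ^ 2), p;
        2 * (x + q) * (q * (t - 2 * p + 2 * q ^ 2) - α) - p * (t - 2 * p + 2 * q ^ 2),
        -(α - q * (t - 2 * p + 2 * q ^ 2))] := by
  ext i j
  fin_cases i <;> fin_cases j <;> simp [higgsField, deformationField] <;> ring

/-- The matrix to which `ε` times the curvature of the Jimbo–Miwa pair evaluates, as a function of
the defects `u`, `v`, `w` of the equations for `q'`, `p'` and `α'`. -/
def defectMatrix (q p x t u v w : R) : Matrix (Fin 2) (Fin 2) R :=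
  !![v - 2 * q * u, -u;
     (t - 2 * p + 2 * q ^ 2) * u - 2 * w - 2 * (x + q) * (v - 2 * q * u), -(v - 2 * q * u)]

theorem defectMatrix_eq_zero_iff [NoZeroDivisors R] [NeZero (2 : R)] (q p x t u v w : R) :
    defectMatrix q p x t u v w = 0 ↔ u = 0 ∧ v = 0 ∧ w = 0 := by
  constructor
  · intro h
    have hu : u = 0 := by simpa [defectMatrix] using congrFun₂ h 0 1
    have hv : v = 0 := by simpa [defectMatrix, hu] using congrFun₂ h 0 0
    have hw : w = 0 := by simpa [defectMatrix, hu, hv, NeZero.ne (2 : R)] using congrFun₂ h 1 0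
    exact ⟨hu, hv, hw⟩
  · rintro ⟨rfl, rfl, rfl⟩
    ext i j
    fin_cases i <;> fin_cases j <;> simp [defectMatrix]

end CommRing

variable {𝕜 : Type*} [NontriviallyNormedField 𝕜]

/-- The curvature at `(x, t)` of the connection `d - A dx - B dt`; its vanishing
is the compatibility condition of `∂_x Y = A Y` and `∂_t Y = B Y`. Derivatives are taken entrywise
since matrices carry no canonical norm. -/
noncomputable def curvature {n : Type*} [Fintype n] (A B : 𝕜 → 𝕜 → Matrix n n 𝕜) (x t : 𝕜) :
    Matrix n n 𝕜 :=
  Matrix.of (fun i j => deriv (fun τ => A x τ i j) t)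
    - Matrix.of (fun i j => deriv (fun y => B y t i j) x)
    + (A x t * B x t - B x t * A x t)

theorem curvature_smul {n : Type*} [Fintype n] {Φ Ψ : 𝕜 → 𝕜 → Matrix n n 𝕜} {Φ' Ψ' : Matrix n n 𝕜}
    {x t : 𝕜} (hΦ : ∀ i j, HasDerivAt (fun τ => Φ x τ i j) (Φ' i j) t)
    (hΨ : ∀ i j, HasDerivAt (fun y => Ψ y t i j) (Ψ' i j) x) (a b : 𝕜) :
    curvature (fun x τ => a • Φ x τ) (fun x τ => b • Ψ x τ) x t =
      a • Φ' - b • Ψ' + (a * b) • (Φ x t * Ψ x t - Ψ x t * Φ x t) := by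
  simp only [curvature, Matrix.smul_apply, ((hΦ _ _).fun_const_smul a).deriv,
    ((hΨ _ _).fun_const_smul b).deriv, smul_mul_smul_comm, mul_comm b a, smul_sub]
  rfl

theorem hasDerivAt_deformationField (q p x t : 𝕜) (i j : Fin 2) :
    HasDerivAt (fun y => deformationField q p y t i j) (!![1, 0; 0, -1] i j) x := by
  have hxq : HasDerivAt (fun y => y + q) 1 x := (hasDerivAt_id x).add_const q
  fin_cases i <;> fin_cases j
  · exact hxq
  · exact hasDerivAt_const x 1
  · exact hasDerivAt_const x (t - 2 * p + 2 * q ^ 2)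
  · exact hxq.neg

section JimboMiwaPair

variable {q p α : 𝕜 → 𝕜} {q' p' α' t : 𝕜}

theorem hasDerivAt_higgsField (hq : HasDerivAt q q' t) (hp : HasDerivAt p p' t)
    (hα : HasDerivAt α α' t) (x : 𝕜) (i j : Fin 2) :
    HasDerivAt (fun τ => higgsField (q τ) (p τ) (α τ) x τ i j)
      (!![p' - 2 * q t * q', -q';
          q' * (t - 2 * p t + 2 * q t ^ 2) + (x + q t) * (1 - 2 * p' + 4 * q t * q') - 2 * α',
          -(p' - 2 * q t * q')] i j) t := by
  have hq2 : HasDerivAt (fun τ => q τ ^ 2) (2 * q t * q') t := by simpa using hq.fun_pow 2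
  have hdiag : HasDerivAt (fun τ => x ^ 2 + p τ - q τ ^ 2) (p' - 2 * q t * q') t :=
    (hp.const_add (x ^ 2)).sub hq2
  have hpot : HasDerivAt (fun τ => τ - 2 * p τ + 2 * q τ ^ 2) (1 - 2 * p' + 4 * q t * q') t :=
    (((hasDerivAt_id t).sub (hp.const_mul 2)).add (hq2.const_mul 2)).congr_deriv (by ring)
  fin_cases i <;> fin_cases j
  · exact hdiag
  · exact hq.const_sub x
  · exact ((hq.const_add x).mul hpot).sub (hα.const_mul 2)
  · exact hdiag.neg

variable [NeZero (2 : 𝕜)] {ε : 𝕜}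

theorem curvature_jimboMiwa (hε : ε ≠ 0) (hq : HasDerivAt q q' t) (hp : HasDerivAt p p' t)
    (hα : HasDerivAt α α' t) (x : 𝕜) :
    curvature (fun x τ => ε⁻¹ • higgsField (q τ) (p τ) (α τ) x τ)
        (fun x τ => (2 * ε)⁻¹ • deformationField (q τ) (p τ) x τ) x t =
      ε⁻¹ • defectMatrix (q t) (p t) x t (q' - p t / ε)
        (p' - ((2 * q t ^ 3 + t * q t - α t) / ε + 1 / 2)) α' := by
  rw [curvature_smul (Φ := fun x τ => higgsField (q τ) (p τ) (α τ) x τ)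
      (Ψ := fun x τ => deformationField (q τ) (p τ) x τ) (hasDerivAt_higgsField hq hp hα x)
      (hasDerivAt_deformationField (q t) (p t) x t),
    higgsField_commutator_deformationField]
  ext i j
  fin_cases i <;> fin_cases j <;> simp [defectMatrix] <;> field_simp <;> ring

theorem curvature_jimboMiwa_eq_zero_iff (hε : ε ≠ 0) (hq : DifferentiableAt 𝕜 q t)
    (hp : DifferentiableAt 𝕜 p t) (hα : DifferentiableAt 𝕜 α t) (x : 𝕜) :
    curvature (fun x τ => ε⁻¹ • higgsField (q τ) (p τ) (α τ) x τ)
        (fun x τ => (2 * ε)⁻¹ • deformationField (q τ) (p τ) x τ) x t = 0 ↔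
      deriv q t = p t / ε ∧
        deriv p t = (2 * q t ^ 3 + t * q t - α t) / ε + 1 / 2 ∧
        deriv α t = 0 := by
  rw [curvature_jimboMiwa hε hq.hasDerivAt hp.hasDerivAt hα.hasDerivAt,
    smul_eq_zero_iff_right (inv_ne_zero hε), defectMatrix_eq_zero_iff, sub_eq_zero, sub_eq_zero]

end JimboMiwaPair

section Pencil

variable {F : Type*} [Field F] [NeZero (2 : F)] {ε : F}

theorem pencil_eq_smul_higgsField (hε : ε ≠ 0) (q p r s α x t : F) :
    !![r + (x ^ 2 + p - q ^ 2) / ε, (x - q) / ε;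
       -2 * s - 1 - 2 * r * (x + q) + ((x + q) * (t - 2 * p + 2 * q ^ 2) - 2 * α) / ε,
       -(r + (x ^ 2 + p - q ^ 2) / ε)] =
      ε⁻¹ • higgsField q (p + ε * r) (α + ε * (s + 1 / 2)) x t := by
  ext i j
  fin_cases i <;> fin_cases j <;> simp [higgsField] <;> field_simp <;> ring

theorem pencil_eq_smul_deformationField (hε : ε ≠ 0) (q p r x t : F) :
    !![0, 0; -r, 0] + (1 / (2 * ε)) • !![q + x, 1; -2 * p + 2 * q ^ 2 + t, -q - x] =
      (2 * ε)⁻¹ • deformationField q (p + ε * r) x t := by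
  ext i j
  fin_cases i <;> fin_cases j <;>
    simp [deformationField, -mul_eq_mul_left_iff] <;> field_simp <;> ring

end Pencil

end PainleveII

open PainleveII

theorem stmt11_general {𝕜 : Type*} [NontriviallyNormedField 𝕜] [NeZero (2 : 𝕜)]
    {ε : 𝕜} (hε : ε ≠ 0) {q p r s α : 𝕜 → 𝕜} {t₀ : 𝕜}
    (hq : DifferentiableAt 𝕜 q t₀)
    (hP : DifferentiableAt 𝕜 (fun t => p t + ε * r t) t₀)
    (ha : DifferentiableAt 𝕜 (fun t => α t + ε * s t) t₀)
    {A B : 𝕜 → 𝕜 → Matrix (Fin 2) (Fin 2) 𝕜}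
    (hA : ∀ x t, A x t =
      !![r t + (x ^ 2 + p t - (q t) ^ 2) / ε, (x - q t) / ε;
         -2 * s t - 1 - 2 * r t * (x + q t)
           + ((x + q t) * (t - 2 * p t + 2 * (q t) ^ 2) - 2 * α t) / ε,
         -(r t + (x ^ 2 + p t - (q t) ^ 2) / ε)])
    (hB : ∀ x t, B x t = !![0, 0; -r t, 0]
      + (1 / (2 * ε)) • !![q t + x, 1; -2 * p t + 2 * (q t) ^ 2 + t, -(q t) - x])
    (x : 𝕜) :
    curvature A B x t₀ = 0 ↔
      deriv q t₀ = p t₀ / ε + r t₀ ∧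
      deriv (fun t => p t + ε * r t) t₀ = (2 * (q t₀) ^ 3 + t₀ * q t₀ - α t₀) / ε - s t₀ ∧
      deriv (fun t => α t + ε * s t) t₀ = 0 := by
  have shift : (fun t => α t + ε * (s t + 1 / 2)) = fun t => α t + ε * s t + ε * (1 / 2) := by
    funext t
    ring
  have ha' : DifferentiableAt 𝕜 (fun t => α t + ε * (s t + 1 / 2)) t₀ :=
    shift ▸ ha.add_const (ε * (1 / 2))
  have velocity : (p t₀ + ε * r t₀) / ε = p t₀ / ε + r t₀ := by field_simp
  have force : (2 * q t₀ ^ 3 + t₀ * q t₀ - (α t₀ + ε * (s t₀ + 1 / 2))) / ε + 1 / 2 =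
      (2 * q t₀ ^ 3 + t₀ * q t₀ - α t₀) / ε - s t₀ := by
    field_simp
    ring
  obtain rfl := funext₂ fun x t => (hA x t).trans (pencil_eq_smul_higgsField hε ..)
  obtain rfl := funext₂ fun x t => (hB x t).trans (pencil_eq_smul_deformationField hε ..)
  rw [curvature_jimboMiwa_eq_zero_iff hε hq hP ha', velocity, force, shift, deriv_add_const]

/- Painlevé II: the zero-curvature equation for the pencil of connections holds
   for all x iff the three isomonodromy equations hold. -/
theorem stmt11
    (ε : ℂ) (hε : ε ≠ 0)
    (U : Set ℂ) (hU : IsOpen U)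
    (q p r s α : ℂ → ℂ)
    (hq : ∀ t ∈ U, DifferentiableAt ℂ q t)
    (hp : ∀ t ∈ U, DifferentiableAt ℂ p t)
    (hr : ∀ t ∈ U, DifferentiableAt ℂ r t)
    (hs : ∀ t ∈ U, DifferentiableAt ℂ s t)
    (hα : ∀ t ∈ U, DifferentiableAt ℂ α t)
    (A B : ℂ → ℂ → Matrix (Fin 2) (Fin 2) ℂ)
    (hA : ∀ x t, A x t =
      !![r t + (x ^ 2 + p t - (q t) ^ 2) / ε, (x - q t) / ε;
         -2 * s t - 1 - 2 * r t * (x + q t)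
           + ((x + q t) * (t - 2 * p t + 2 * (q t) ^ 2) - 2 * α t) / ε,
         -(r t + (x ^ 2 + p t - (q t) ^ 2) / ε)])
    (hB : ∀ x t, B x t = !![0, 0; -r t, 0]
      + (1 / (2 * ε)) • !![q t + x, 1; -2 * p t + 2 * (q t) ^ 2 + t, -(q t) - x])
    (t₀ : ℂ) (ht₀ : t₀ ∈ U) :
    (∀ x : ℂ,
        Matrix.of (fun i j => deriv (fun t => A x t i j) t₀)
          - Matrix.of (fun i j => deriv (fun y => B y t₀ i j) x)
          + (A x t₀ * B x t₀ - B x t₀ * A x t₀) = 0)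
      ↔ (deriv q t₀ = p t₀ / ε + r t₀ ∧
         deriv (fun t => p t + ε * r t) t₀
           = (2 * (q t₀) ^ 3 + t₀ * q t₀ - α t₀) / ε - s t₀ ∧
         deriv (fun t => α t + ε * s t) t₀ = 0) := by
  have hP := (hp t₀ ht₀).fun_add ((hr t₀ ht₀).const_mul ε)
  have ha := (hα t₀ ht₀).fun_add ((hs t₀ ht₀).const_mul ε)
  exact (forall_congr' (stmt11_general hε (hq t₀ ht₀) hP ha hA hB)).trans (forall_const ℂ)
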